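/- arXiv:0712.2631 — 4 statements merged into one kernel-verified Lean document; each statement's English description precedes it below -/
import Mathlib

section
/- Let n ≥ 1 and let K, T ⊂ ℝ^{2n} be convex bodies. Then c(K+T)^{1/2} ≥ c(K)^{1/2} + c(T)^{1/2}, where K+T = {x+y : x ∈ K, y ∈ T} is the Minkowski sum. -/
open MeasureTheory Real Set Filter intervalIntegral Metric
open scoped InnerProductSpace Topology Pointwise

noncomputable section

/-- The phase space `ℝ^{2n}`. -/
abbrev E (n : ℕ) := EuclideanSpace ℝ (Fin (2 * n))

/-- The standard complex structure `J` on `ℝ^{2n}`, given in coordinates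
`(x₁,y₁,…,xₙ,yₙ)` by `J(x₁,y₁,…,xₙ,yₙ) = (−y₁,x₁,…,−yₙ,xₙ)`. -/
def Jmap (n : ℕ) (v : E n) : E n := WithLp.toLp 2 fun i =>
  if _h : i.val % 2 = 0 then -v ⟨i.val + 1, by have := i.isLt; omega⟩
  else v ⟨i.val - 1, by have := i.isLt; omega⟩

/-- The support function `h_K(u) = sup_{x ∈ K} ⟨x, u⟩`. -/
def suppFn (n : ℕ) (K : Set (E n)) (u : E n) : ℝ :=
  sSup ((fun x => ⟪x, u⟫_ℝ) '' K)

/-- A convex body: a compact convex set with nonempty interior. -/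
def IsConvexBody (n : ℕ) (K : Set (E n)) : Prop :=
  IsCompact K ∧ Convex ℝ K ∧ (interior K).Nonempty

/-- Membership in the loop space `𝓔_p`: the pair `(z, dz)` represents an absolutely
continuous `2π`-periodic loop `z` with derivative `dz ∈ L^p([0,2π])`, mean zero and
normalized action `(1/2)∫₀^{2π} ⟨J z, ż⟩ = 1`. -/
def InE (n : ℕ) (p : ℝ) (z dz : ℝ → E n) : Prop :=
  Function.Periodic z (2 * π) ∧
  (∀ a b : ℝ, IntervalIntegrable dz volume a b) ∧
  (∀ t, z t = z 0 + ∫ s in (0:ℝ)..t, dz s) ∧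
  MemLp dz (ENNReal.ofReal p) (volume.restrict (Set.Ioc (0:ℝ) (2 * π))) ∧
  (∫ t in (0:ℝ)..(2 * π), z t) = 0 ∧
  (1 / 2) * ∫ t in (0:ℝ)..(2 * π), ⟪Jmap n (z t), dz t⟫_ℝ = 1

/-- The (Ekeland–Hofer–Zehnder) capacity of a convex body,
`c(S) = (π · inf_{z ∈ 𝓔₂} (1/2π) ∫₀^{2π} h_S(ż(t)) dt)²`. -/
def capacity (n : ℕ) (S : Set (E n)) : ℝ :=
  (π * sInf { r : ℝ | ∃ z dz : ℝ → E n, InE n 2 z dz ∧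
      r = (1 / (2 * π)) * ∫ t in (0:ℝ)..(2 * π), suppFn n S (dz t) }) ^ 2

/-- The action `𝒜(γ) = (1/2) ∫₀^{T₀} ⟨−Jγ̇(t), γ(t)⟩ dt` of a `T₀`-periodic curve. -/
def action (n : ℕ) (γ : ℝ → E n) (T₀ : ℝ) : ℝ :=
  (1 / 2) * ∫ t in (0:ℝ)..T₀, ⟪-Jmap n (deriv γ t), γ t⟫_ℝ

/-- A closed characteristic on `∂K`: a nonconstant `T₀`-periodic `C¹` curve lying on
`∂K` satisfying `γ̇ = d·J∇F(γ)` for some `d > 0`, where `F = ‖·‖_K²`. -/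
def IsClosedCharacteristic (n : ℕ) (K : Set (E n)) (γ : ℝ → E n) (T₀ : ℝ) : Prop :=
  0 < T₀ ∧ Function.Periodic γ T₀ ∧ ContDiff ℝ 1 γ ∧ (∃ s t, γ s ≠ γ t) ∧
  (∀ t, γ t ∈ frontier K) ∧
  ∃ d : ℝ, 0 < d ∧ ∀ t, deriv γ t = d • Jmap n (gradient (fun x => gauge K x ^ 2) (γ t))

/-- A capacity carrier of `K`: a closed characteristic on `∂K` of minimal action. -/
def IsCapacityCarrier (n : ℕ) (K : Set (E n)) (γ : ℝ → E n) (T₀ : ℝ) : Prop :=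
  IsClosedCharacteristic n K γ T₀ ∧
  ∀ γ' T₀', IsClosedCharacteristic n K γ' T₀' → action n γ T₀ ≤ action n γ' T₀'

/-- The minimal action of a closed characteristic on `∂K`. -/
def minAction (n : ℕ) (K : Set (E n)) : ℝ :=
  sInf { a : ℝ | ∃ γ T₀, IsClosedCharacteristic n K γ T₀ ∧ a = action n γ T₀ }

/-- `K` has smooth boundary: its gauge function is `C¹` away from the origin. -/
def HasSmoothBoundary (n : ℕ) (K : Set (E n)) : Prop :=
  ContDiffOn ℝ 1 (gauge K) {(0 : E n)}ᶜ

/-- The `p`-sum `K +ₚ T` of Firey: the convex body with support function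
`(h_K^p + h_T^p)^{1/p}`. -/
def pSum (n : ℕ) (p : ℝ) (K T : Set (E n)) : Set (E n) :=
  { x | ∀ u, ⟪x, u⟫_ℝ ≤ (suppFn n K u ^ p + suppFn n T u ^ p) ^ (1 / p) }

/-- The polar body `T° = {x : ⟨x,y⟩ ≤ 1 for all y ∈ T}`. -/
def polarBody (n : ℕ) (T : Set (E n)) : Set (E n) :=
  { x | ∀ y ∈ T, ⟪x, y⟫_ℝ ≤ 1 }

/-- The length `∫₀^{T₀} ‖γ̇(t)‖_B dt` of a curve measured with the gauge of `B`. -/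
def lengthIn (n : ℕ) (B : Set (E n)) (γ : ℝ → E n) (T₀ : ℝ) : ℝ :=
  ∫ t in (0:ℝ)..T₀, gauge B (deriv γ t)

/-- Critical point of the functional `I_p(z) = ∫₀^{2π} h_K^p(ż(t)) dt` on `𝓔_p`. -/
def IsCriticalPoint (n : ℕ) (p : ℝ) (K : Set (E n)) (z dz : ℝ → E n) : Prop :=
  ∀ ξ dξ : ℝ → E n,
    Function.Periodic ξ (2 * π) →
    (∀ a b : ℝ, IntervalIntegrable dξ volume a b) →
    (∀ t, ξ t = ξ 0 + ∫ s in (0:ℝ)..t, dξ s) →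
    MemLp dξ (ENNReal.ofReal p) (volume.restrict (Set.Ioc (0:ℝ) (2 * π))) →
    (∫ t in (0:ℝ)..(2 * π), ξ t) = 0 →
    (∫ t in (0:ℝ)..(2 * π), ⟪ξ t, Jmap n (dz t)⟫_ℝ) = 0 →
    (∫ t in (0:ℝ)..(2 * π), ⟪gradient (fun u => suppFn n K u ^ p) (dz t), dξ t⟫_ℝ) = 0

/-- The rotation-invariant probability measure on the unit sphere of `ℝ^{2n}`. -/
def sphereMeasure (n : ℕ) : Measure (sphere (0 : E n) 1) :=
  ((volume : Measure (E n)).toSphere Set.univ)⁻¹ • (volume : Measure (E n)).toSphere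

/-- The mean width parameter `M*(K) = ∫_{S^{2n-1}} h_K dσ`. -/
def meanWidth (n : ℕ) (K : Set (E n)) : ℝ :=
  ∫ x : sphere (0 : E n) 1, suppFn n K (x : E n) ∂(sphereMeasure n)

theorem supp_bdd (n : ℕ) (S : Set (E n)) (hS : IsCompact S) (u : E n) :
    BddAbove ((fun x => ⟪x, u⟫_ℝ) '' S) :=
  (hS.image (by fun_prop)).bddAbove

theorem supp_le (n : ℕ) (S : Set (E n)) (hS : IsCompact S) (u x : E n) (hx : x ∈ S) :
    ⟪x, u⟫_ℝ ≤ suppFn n S u :=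
  le_csSup (supp_bdd n S hS u) ⟨x, hx, rfl⟩

theorem supp_lip (n : ℕ) (S : Set (E n)) (hS : IsCompact S) (hne : S.Nonempty) :
    ∃ R : NNReal, LipschitzWith R (suppFn n S) := by
  obtain ⟨R, hR⟩ := hS.isBounded.exists_norm_le
  refine ⟨R.toNNReal, LipschitzWith.of_le_add_mul _ fun u v => ?_⟩
  refine csSup_le (hne.image _) ?_
  rintro _ ⟨x, hx, rfl⟩
  have h1 := supp_le n S hS v x hx
  have h2 : ⟪x, u - v⟫_ℝ ≤ ‖x‖ * ‖u - v‖ := real_inner_le_norm _ _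
  have h3 : ‖x‖ * ‖u - v‖ ≤ (R.toNNReal : ℝ) * ‖u - v‖ :=
    mul_le_mul_of_nonneg_right ((hR x hx).trans (Real.le_coe_toNNReal R)) (norm_nonneg _)
  rw [inner_sub_right] at h2
  rw [dist_eq_norm]
  show ⟪x, u⟫_ℝ ≤ _
  linarith

theorem supp_add (n : ℕ) (K T : Set (E n)) (hK : IsCompact K) (hT : IsCompact T)
    (hKn : K.Nonempty) (hTn : T.Nonempty) (u : E n) :
    suppFn n (K + T) u = suppFn n K u + suppFn n T u := by
  unfold suppFn
  rw [← csSup_add (hKn.image _) (supp_bdd n K hK u) (hTn.image _) (supp_bdd n T hT u)]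
  congr 1
  ext r
  simp only [Set.mem_image, Set.mem_add]
  constructor
  · rintro ⟨_, ⟨x, hx, y, hy, rfl⟩, rfl⟩
    exact ⟨_, ⟨x, hx, rfl⟩, _, ⟨y, hy, rfl⟩, (inner_add_left _ _ _).symm⟩
  · rintro ⟨_, ⟨x, hx, rfl⟩, _, ⟨y, hy, rfl⟩, rfl⟩
    exact ⟨_, ⟨x, hx, y, hy, rfl⟩, inner_add_left _ _ _⟩

theorem supp_int (n : ℕ) (S : Set (E n)) (hS : IsCompact S) (hne : S.Nonempty)
    (dz : ℝ → E n) (a b : ℝ) (h : IntervalIntegrable dz volume a b) :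
    IntervalIntegrable (fun t => suppFn n S (dz t)) volume a b := by
  obtain ⟨R, hR⟩ := supp_lip n S hS hne
  have h0 : suppFn n S 0 = 0 := by
    unfold suppFn
    simp [hne.image_const]
  refine (h.norm.const_mul (R : ℝ)).mono_fun' ?_ ?_
  · exact hR.continuous.comp_aestronglyMeasurable (intervalIntegrable_iff.mp h).aestronglyMeasurable
  · refine Filter.Eventually.of_forall fun t => ?_
    have := hR.dist_le_mul (dz t) 0
    simpa [h0, dist_eq_norm] using this

theorem supp_nonneg (n : ℕ) (S : Set (E n)) (hS : IsCompact S) (hne : S.Nonempty)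
    (z dz : ℝ → E n) (h : InE n 2 z dz) :
    0 ≤ (1 / (2 * π)) * ∫ t in (0:ℝ)..(2 * π), suppFn n S (dz t) := by
  obtain ⟨hper, hint, hz, -⟩ := h
  obtain ⟨x, hx⟩ := hne
  have hzero : ∫ s in (0:ℝ)..(2 * π), dz s = 0 := by
    have h1 := hz (2 * π)
    have h2 : z (2 * π) = z 0 := by simpa using hper 0
    rw [h2] at h1
    simpa using h1
  have hl : ∫ s in (0:ℝ)..(2 * π), ⟪x, dz s⟫_ℝ = 0 := by
    have := (innerSL ℝ x).intervalIntegral_comp_comm (hint 0 (2 * π))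
    simpa [hzero] using this
  refine mul_nonneg (by positivity) ?_
  refine hl.symm.le.trans ?_
  refine intervalIntegral.integral_mono_on two_pi_pos.le ?_
    (supp_int n S hS ⟨x, hx⟩ dz _ _ (hint _ _)) fun t _ => supp_le n S hS _ x hx
  have hi := hint 0 (2 * π)
  exact ⟨(innerSL ℝ x).integrable_comp hi.1, (innerSL ℝ x).integrable_comp hi.2⟩

/-- **Brunn–Minkowski inequality for the Ekeland–Hofer–Zehnder capacity.**
For `n ≥ 1` and convex bodies `K, T ⊂ ℝ^{2n}`,
`c(K+T)^{1/2} ≥ c(K)^{1/2} + c(T)^{1/2}`. -/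
theorem brunn_minkowski_capacity (n : ℕ) (hn : 1 ≤ n) (K T : Set (E n))
    (hK : IsConvexBody n K) (hT : IsConvexBody n T) :
    Real.sqrt (capacity n (K + T)) ≥ Real.sqrt (capacity n K) + Real.sqrt (capacity n T) := by
  obtain ⟨hKc, -, hKi⟩ := hK
  obtain ⟨hTc, -, hTi⟩ := hT
  have hKn := hKi.mono interior_subset
  have hTn := hTi.mono interior_subset
  have key : ∀ S : Set (E n), IsCompact S → S.Nonempty → Real.sqrt (capacity n S) =
      π * sInf { r : ℝ | ∃ z dz : ℝ → E n, InE n 2 z dz ∧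
      r = (1 / (2 * π)) * ∫ t in (0:ℝ)..(2 * π), suppFn n S (dz t) } := by
    intro S hS hne
    unfold capacity
    refine Real.sqrt_sq (mul_nonneg pi_pos.le (Real.sInf_nonneg ?_))
    rintro _ ⟨z, dz, h, rfl⟩
    exact supp_nonneg n S hS hne z dz h
  have bdd : ∀ S : Set (E n), IsCompact S → S.Nonempty →
      BddBelow { r : ℝ | ∃ z dz : ℝ → E n, InE n 2 z dz ∧
      r = (1 / (2 * π)) * ∫ t in (0:ℝ)..(2 * π), suppFn n S (dz t) } := by
    intro S hS hne
    refine ⟨0, ?_⟩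
    rintro _ ⟨z, dz, h, rfl⟩
    exact supp_nonneg n S hS hne z dz h
  rw [key K hKc hKn, key T hTc hTn, key (K + T) (hKc.add hTc) (hKn.add hTn), ← mul_add]
  refine mul_le_mul_of_nonneg_left ?_ pi_pos.le
  by_cases hE : ∃ z dz : ℝ → E n, InE n 2 z dz
  · obtain ⟨z, dz, h⟩ := hE
    refine le_csInf ⟨_, z, dz, h, rfl⟩ ?_
    rintro _ ⟨z, dz, h, rfl⟩
    have e : ∫ t in (0:ℝ)..(2 * π), suppFn n (K + T) (dz t) =
        (∫ t in (0:ℝ)..(2 * π), suppFn n K (dz t)) + ∫ t in (0:ℝ)..(2 * π), suppFn n T (dz t) := by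
      simp_rw [supp_add n K T hKc hTc hKn hTn]
      exact intervalIntegral.integral_add (supp_int n K hKc hKn dz _ _ (h.2.1 _ _))
        (supp_int n T hTc hTn dz _ _ (h.2.1 _ _))
    rw [e, mul_add]
    exact add_le_add (csInf_le (bdd K hKc hKn) ⟨z, dz, h, rfl⟩)
      (csInf_le (bdd T hTc hTn) ⟨z, dz, h, rfl⟩)
  · have em : ∀ S : Set (E n), { r : ℝ | ∃ z dz : ℝ → E n, InE n 2 z dz ∧
      r = (1 / (2 * π)) * ∫ t in (0:ℝ)..(2 * π), suppFn n S (dz t) } = ∅ := by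
      intro S
      ext r
      simp only [Set.mem_ofPred_eq, Set.mem_empty_iff_false, iff_false]
      rintro ⟨z, dz, h, -⟩
      exact hE ⟨z, dz, h⟩
    rw [em, em, em]
    simp
end
end

section
/- Let n ≥ 1, p ≥ 1, and let K, T ⊂ ℝ^{2n} be convex bodies containing the origin. Then c(K+ₚT)^{p/2} ≥ c(K)^{p/2} + c(T)^{p/2}. -/
open MeasureTheory Real Set Filter intervalIntegral Metric
open scoped InnerProductSpace Topology Pointwise

noncomputable section

section helpers

variable {n : ℕ}

lemma bmc_bdd {K : Set (E n)} (hK : IsCompact K) (u : E n) :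
    BddAbove ((fun x => ⟪x, u⟫_ℝ) '' K) :=
  (hK.image (by fun_prop)).bddAbove

lemma bmc_nonneg {K : Set (E n)} (hK : IsCompact K) (h0 : (0 : E n) ∈ K) (u : E n) :
    0 ≤ suppFn n K u :=
  le_csSup (bmc_bdd hK u) ⟨0, h0, by simp⟩

lemma bmc_add {K : Set (E n)} (hK : IsCompact K) (h0 : (0 : E n) ∈ K) (u v : E n) :
    suppFn n K (u + v) ≤ suppFn n K u + suppFn n K v := by
  refine csSup_le (Set.Nonempty.image _ ⟨0, h0⟩) ?_
  rintro _ ⟨x, hx, rfl⟩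
  simp only [inner_add_right]
  exact add_le_add (le_csSup (bmc_bdd hK u) ⟨x, hx, rfl⟩) (le_csSup (bmc_bdd hK v) ⟨x, hx, rfl⟩)

lemma bmc_smul {K : Set (E n)} (c : ℝ) (hc : 0 ≤ c) (u : E n) :
    suppFn n K (c • u) = c * suppFn n K u := by
  unfold suppFn
  have : (fun x => ⟪x, c • u⟫_ℝ) '' K = c • ((fun x => ⟪x, u⟫_ℝ) '' K) := by
    ext y
    simp [Set.mem_smul_set, inner_smul_right]
  rw [this, Real.sSup_smul_of_nonneg hc, smul_eq_mul]

lemma bmc_bound {K : Set (E n)} (hK : IsCompact K) (h0 : (0 : E n) ∈ K) :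
    ∃ R : ℝ, 0 ≤ R ∧ ∀ u, suppFn n K u ≤ R * ‖u‖ := by
  obtain ⟨R, hR⟩ := hK.isBounded.exists_norm_le
  refine ⟨R, (norm_nonneg _).trans (hR 0 h0), fun u => ?_⟩
  refine csSup_le (Set.Nonempty.image _ ⟨0, h0⟩) ?_
  rintro _ ⟨x, hx, rfl⟩
  exact (real_inner_le_norm x u).trans (mul_le_mul_of_nonneg_right (hR x hx) (norm_nonneg _))

lemma bmc_cont {K : Set (E n)} (hK : IsCompact K) (h0 : (0 : E n) ∈ K) :
    Continuous (suppFn n K) := by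
  obtain ⟨R, hR0, hR⟩ := bmc_bound hK h0
  have : LipschitzWith (Real.toNNReal R) (suppFn n K) := by
    refine LipschitzWith.of_le_add_mul _ fun u v => ?_
    have h1 := bmc_add hK h0 v (u - v)
    have h2 := hR (u - v)
    rw [add_sub_cancel] at h1
    rw [Real.coe_toNNReal _ hR0, dist_eq_norm]
    linarith
  exact this.continuous

lemma bmc_integrable {K : Set (E n)} (hK : IsCompact K) (h0 : (0 : E n) ∈ K)
    {μ : Measure ℝ} {f : ℝ → E n} (hf : Integrable f μ) :
    Integrable (fun t => suppFn n K (f t)) μ := by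
  obtain ⟨R, hR0, hR⟩ := bmc_bound hK h0
  refine (hf.norm.const_mul R).mono' ((bmc_cont hK h0).comp_aestronglyMeasurable hf.1) ?_
  refine Eventually.of_forall fun t => ?_
  rw [Real.norm_of_nonneg (bmc_nonneg hK h0 _)]
  exact hR _

/-- the `p`-norm of a pair -/
def bmcN (p a b : ℝ) : ℝ := (a ^ p + b ^ p) ^ (1 / p)

lemma bmcN_eq (p : ℝ) (hp : 1 ≤ p) [Fact (1 ≤ ENNReal.ofReal p)] (a b : ℝ) (ha : 0 ≤ a)
    (hb : 0 ≤ b) : bmcN p a b = ‖WithLp.toLp (ENNReal.ofReal p) (a, b)‖ := by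
  have h : (ENNReal.ofReal p).toReal = p := ENNReal.toReal_ofReal (by linarith)
  rw [WithLp.prod_norm_eq_add (by rw [h]; linarith), h]
  simp [bmcN, abs_of_nonneg, ha, hb]

lemma bmcN_mono (p : ℝ) (hp : 1 ≤ p) {a b a' b' : ℝ} (ha : 0 ≤ a)
    (hb : 0 ≤ b) (h1 : a ≤ a') (h2 : b ≤ b') : bmcN p a b ≤ bmcN p a' b' := by
  unfold bmcN
  gcongr

lemma bmcN_add (p : ℝ) (hp : 1 ≤ p) {a b a' b' : ℝ} (ha : 0 ≤ a)
    (hb : 0 ≤ b) (ha' : 0 ≤ a') (hb' : 0 ≤ b') :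
    bmcN p (a + a') (b + b') ≤ bmcN p a b + bmcN p a' b' := by
  haveI : Fact (1 ≤ ENNReal.ofReal p) := ⟨by simpa using hp⟩
  rw [bmcN_eq p hp _ _ (by positivity) (by positivity), bmcN_eq p hp _ _ ha hb,
    bmcN_eq p hp _ _ ha' hb']
  exact norm_add_le (WithLp.toLp (ENNReal.ofReal p) (a, b)) (WithLp.toLp (ENNReal.ofReal p) (a', b'))

lemma bmcN_smul (p : ℝ) (hp : 1 ≤ p) {a b c : ℝ} (ha : 0 ≤ a) (hb : 0 ≤ b) (hc : 0 ≤ c) :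
    bmcN p (c * a) (c * b) = c * bmcN p a b := by
  unfold bmcN
  rw [mul_rpow hc ha, mul_rpow hc hb, ← mul_add, mul_rpow (by positivity) (by positivity),
    ← rpow_mul hc, mul_one_div_cancel (by linarith), rpow_one]

lemma bmcN_integral (p : ℝ) (hp : 1 ≤ p) {μ : Measure ℝ} {f g : ℝ → ℝ}
    (hf : Integrable f μ) (hg : Integrable g μ) (hf0 : ∀ t, 0 ≤ f t) (hg0 : ∀ t, 0 ≤ g t) :
    bmcN p (∫ t, f t ∂μ) (∫ t, g t ∂μ) ≤ ∫ t, bmcN p (f t) (g t) ∂μ := by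
  haveI : Fact (1 ≤ ENNReal.ofReal p) := ⟨by simpa using hp⟩
  let L : (ℝ × ℝ) →L[ℝ] WithLp (ENNReal.ofReal p) (ℝ × ℝ) :=
    (WithLp.prodContinuousLinearEquiv (ENNReal.ofReal p) ℝ ℝ ℝ).symm
  have hL : ∀ x, L x = WithLp.toLp (ENNReal.ofReal p) x := fun x => rfl
  rw [bmcN_eq p hp _ _ (integral_nonneg hf0) (integral_nonneg hg0)]
  simp_rw [fun t => bmcN_eq p hp _ _ (hf0 t) (hg0 t)]
  rw [← integral_pair hf hg, ← hL, ← L.integral_comp_comm (hf.prodMk hg)]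
  exact norm_integral_le_integral_norm _

lemma bmc_suppFn_pSum (p : ℝ) (hp : 1 ≤ p) {K T : Set (E n)} (hK : IsCompact K)
    (hT : IsCompact T) (h0K : (0 : E n) ∈ K) (h0T : (0 : E n) ∈ T) (u : E n) :
    suppFn n (pSum n p K T) u = bmcN p (suppFn n K u) (suppFn n T u) := by
  set N : E n → ℝ := fun u => bmcN p (suppFn n K u) (suppFn n T u) with hN
  have kn := bmc_nonneg hK h0K
  have tn := bmc_nonneg hT h0T
  have hNs : ∀ c : ℝ, 0 ≤ c → ∀ x, N (c • x) = c * N x := fun c hc x => by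
    simp only [hN, bmc_smul c hc, bmcN_smul p hp (kn x) (tn x) hc]
  have hNa : ∀ x y, N (x + y) ≤ N x + N y := fun x y =>
    (bmcN_mono p hp (kn _) (tn _) (bmc_add hK h0K x y) (bmc_add hT h0T x y)).trans
      (bmcN_add p hp (kn _) (tn _) (kn _) (tn _))
  have hN0 : ∀ x, 0 ≤ N x := fun x => by
    have := kn x
    have := tn x
    simp only [hN, bmcN]
    positivity
  have hz : (0 : E n) ∈ pSum n p K T := fun v => by
    rw [inner_zero_left]; exact hN0 v
  have hbd : ∀ y ∈ (fun x => ⟪x, u⟫_ℝ) '' pSum n p K T, y ≤ N u := by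
    rintro _ ⟨x, hx, rfl⟩
    exact hx u
  apply le_antisymm (csSup_le (Set.Nonempty.image _ ⟨0, hz⟩) hbd)
  apply le_csSup ⟨_, hbd⟩
  have hdom : ∀ c : ℝ, c • u = 0 → c • N u = 0 := fun c hc => by
    rcases smul_eq_zero.1 hc with h | h
    · simp [h]
    · have h0 := hNs 0 le_rfl 0
      rw [zero_smul, zero_mul] at h0
      rw [h, h0, smul_zero]
  obtain ⟨g, hg1, hg2⟩ := exists_extension_of_le_sublinear
    (LinearPMap.mkSpanSingleton' u (N u) hdom) N (fun c hc x => hNs c hc.le x) hNa (by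
      rintro ⟨x, hx⟩
      obtain ⟨c, rfl⟩ := Submodule.mem_span_singleton.1 hx
      rw [LinearPMap.mkSpanSingleton'_apply, smul_eq_mul]
      show c * N u ≤ N (c • u)
      rcases le_total 0 c with hc | hc
      · rw [hNs c hc]
      · exact (mul_nonpos_of_nonpos_of_nonneg hc (hN0 u)).trans (hN0 _))
  let x := (InnerProductSpace.toDual ℝ (E n)).symm (LinearMap.toContinuousLinearMap g)
  have hx : ∀ v, ⟪x, v⟫_ℝ = g v := fun v => by
    simp [x]
  refine ⟨x, fun v => ?_, ?_⟩
  · rw [hx]; exact hg2 v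
  · simp only [hx]
    have := hg1 ⟨u, Submodule.mem_span_singleton_self u⟩
    exact this.trans (LinearPMap.mkSpanSingleton'_apply_self u (N u) hdom _)

/-- the set of values in the definition of the capacity -/
def bmcSet (n : ℕ) (S : Set (E n)) : Set ℝ := { r : ℝ | ∃ z dz : ℝ → E n, InE n 2 z dz ∧
      r = (1 / (2 * π)) * ∫ t in (0:ℝ)..(2 * π), suppFn n S (dz t) }

lemma bmcSet_nonneg {S : Set (E n)} (h : ∀ u, 0 ≤ suppFn n S u) : ∀ r ∈ bmcSet n S, 0 ≤ r := by
  rintro r ⟨z, dz, -, rfl⟩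
  have := intervalIntegral.integral_nonneg (μ := volume) (a := 0) (b := 2 * π)
    (f := fun t => suppFn n S (dz t)) (by positivity) (fun t _ => h _)
  positivity

lemma bmc_cap (p : ℝ) {S : Set (E n)} (h : ∀ u, 0 ≤ suppFn n S u) :
    capacity n S ^ (p / 2) = π ^ p * sInf (bmcSet n S) ^ p := by
  have h1 : 0 ≤ sInf (bmcSet n S) := Real.sInf_nonneg (bmcSet_nonneg h)
  change ((π * sInf (bmcSet n S)) ^ 2) ^ (p / 2) = _
  rw [← rpow_natCast, ← rpow_mul (by positivity), mul_rpow pi_pos.le h1]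
  congr 2 <;> push_cast <;> ring

end helpers

/-- **Brunn–Minkowski inequality for `p`-sums.**
For `n ≥ 1`, `p ≥ 1` and convex bodies `K, T ⊂ ℝ^{2n}` containing the origin,
`c(K+ₚT)^{p/2} ≥ c(K)^{p/2} + c(T)^{p/2}`. -/
theorem brunn_minkowski_capacity_pSum (n : ℕ) (hn : 1 ≤ n) (p : ℝ) (hp : 1 ≤ p)
    (K T : Set (E n)) (hK : IsConvexBody n K) (hT : IsConvexBody n T)
    (h0K : (0 : E n) ∈ K) (h0T : (0 : E n) ∈ T) :
    capacity n (pSum n p K T) ^ (p / 2) ≥ capacity n K ^ (p / 2) + capacity n T ^ (p / 2) := by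
  have kn := bmc_nonneg hK.1 h0K
  have tn := bmc_nonneg hT.1 h0T
  have hs := bmc_suppFn_pSum p hp hK.1 hT.1 h0K h0T
  have sn : ∀ u, 0 ≤ suppFn n (pSum n p K T) u := fun u => by
    have := kn u
    have := tn u
    rw [hs, bmcN]
    positivity
  have hp0 : p ≠ 0 := by linarith
  rw [bmc_cap p kn, bmc_cap p tn, bmc_cap p sn, ← mul_add]
  refine mul_le_mul_of_nonneg_left ?_ (by positivity)
  have hK0 : 0 ≤ sInf (bmcSet n K) := Real.sInf_nonneg (bmcSet_nonneg kn)
  have hT0 : 0 ≤ sInf (bmcSet n T) := Real.sInf_nonneg (bmcSet_nonneg tn)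
  by_cases hne : ∃ z dz : ℝ → E n, InE n 2 z dz
  · have key : bmcN p (sInf (bmcSet n K)) (sInf (bmcSet n T)) ≤ sInf (bmcSet n (pSum n p K T)) := by
      obtain ⟨z, dz, hz⟩ := hne
      refine le_csInf ⟨_, z, dz, hz, rfl⟩ ?_
      rintro r ⟨z, dz, hz, rfl⟩
      have hint : Integrable dz (volume.restrict (Set.Ioc (0:ℝ) (2 * π))) := (hz.2.1 0 (2 * π)).1
      have h1 : sInf (bmcSet n K) ≤ _ :=
        csInf_le ⟨0, bmcSet_nonneg kn⟩ ⟨z, dz, hz, rfl⟩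
      have h2 : sInf (bmcSet n T) ≤ _ :=
        csInf_le ⟨0, bmcSet_nonneg tn⟩ ⟨z, dz, hz, rfl⟩
      refine (bmcN_mono p hp hK0 hT0 h1 h2).trans ?_
      have h2pi : (0:ℝ) ≤ 2 * π := by positivity
      simp only [intervalIntegral.integral_of_le h2pi, hs]
      rw [bmcN_smul p hp (integral_nonneg fun _ => kn _) (integral_nonneg fun _ => tn _)
        (by positivity)]
      exact mul_le_mul_of_nonneg_left (bmcN_integral p hp (bmc_integrable hK.1 h0K hint)
        (bmc_integrable hT.1 h0T hint) (fun _ => kn _) (fun _ => tn _)) (by positivity)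
    have h3 : bmcN p (sInf (bmcSet n K)) (sInf (bmcSet n T)) ^ p =
        sInf (bmcSet n K) ^ p + sInf (bmcSet n T) ^ p := by
      rw [bmcN, ← rpow_mul (by positivity), one_div_mul_cancel hp0, rpow_one]
    rw [← h3]
    exact rpow_le_rpow (by rw [bmcN]; positivity) key (by linarith)
  · have he : ∀ S, bmcSet n S = ∅ := fun S => by
      ext r
      simp only [Set.mem_empty_iff_false, iff_false]
      rintro ⟨z, dz, hz, -⟩
      exact hne ⟨z, dz, hz⟩
    simp [he, zero_rpow hp0]
end
end

section
/- Let p > 1. For every z ∈ 𝓔_p one has (∫₀^{2π} |ż(t)|^p dt)^{1/p} ≥ π^{−1/2}. Consequently, if K ⊂ ℝ^{2n} is a convex body containing 0 in its interior and α ≥ 1 is a constant with h_K(y) ≥ α^{−1/p}|y| for all y ∈ ℝ^{2n}, then ∫₀^{2π} h_K^p(ż(t)) dt ≥ π^{−p/2}/α > 0 for every z ∈ 𝓔_p. -/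
open MeasureTheory Real Set Filter intervalIntegral Metric
open scoped InnerProductSpace Topology Pointwise

noncomputable section

lemma ibp (f g φ φ' : ℝ → ℝ) (b : ℝ) (hg : ∀ a b : ℝ, IntervalIntegrable g volume a b)
    (hf : ∀ t, f t = f 0 + ∫ s in (0:ℝ)..t, g s) (hφ : ∀ x, HasDerivAt φ (φ' x) x)
    (hφ' : Continuous φ') :
    ∫ x in (0:ℝ)..b, φ x * g x = φ b * f b - φ 0 * f 0 - ∫ x in (0:ℝ)..b, φ' x * f x := by
  have hfe : f = fun t => f 0 + ∫ s in (0:ℝ)..t, g s := funext hf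
  have hd : deriv φ = φ' := funext fun x => (hφ x).deriv
  have h1 : AbsolutelyContinuousOnInterval φ 0 b := by
    apply ContDiffOn.absolutelyContinuousOnInterval
    apply ContDiff.contDiffOn
    rw [contDiff_one_iff_deriv, hd]
    exact ⟨fun x => (hφ x).differentiableAt, hφ'⟩
  have h2 : AbsolutelyContinuousOnInterval f 0 b := by
    rw [hfe]
    have := (hg 0 b).absolutelyContinuousOnInterval_intervalIntegral (c := 0) (by simp)
    have hc : AbsolutelyContinuousOnInterval (fun _ : ℝ => f 0) 0 b :=
      ContDiffOn.absolutelyContinuousOnInterval contDiffOn_const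
    exact hc.add this
  have key := h1.integral_mul_deriv_eq_deriv_mul h2
  rw [hd] at key
  rw [← key]
  apply intervalIntegral.integral_congr_ae
  have := (hg 0 b).ae_hasDerivAt_integral
  filter_upwards [this] with x hx hxm
  have h3 := hx (uIoc_subset_uIcc hxm) 0 (by simp)
  have h4 : HasDerivAt f (g x) x := by
    rw [hfe]; simpa using h3.const_add (f 0)
  rw [h4.deriv]

lemma fourier_cs (n : ℤ) (x : ℝ) : fourier (-n) (x : AddCircle (2 * π - 0)) =
    ((cos (n * x) : ℝ) : ℂ) - Complex.I * ((sin (n * x) : ℝ) : ℂ) := by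
  rw [fourier_coe_apply]
  have : (2 * (π:ℂ) * Complex.I * ((-n : ℤ) : ℂ) * (x:ℂ) / ((2 * π - 0 : ℝ) : ℂ)) =
      ((-(n * x) : ℝ) : ℂ) * Complex.I := by
    have : (π : ℂ) ≠ 0 := by exact_mod_cast pi_ne_zero
    push_cast
    field_simp
    ring
  rw [this, Complex.exp_mul_I, ← Complex.ofReal_cos, ← Complex.ofReal_sin, cos_neg, sin_neg]
  push_cast
  ring

lemma fourier_int (f : ℝ → ℝ) (hf : IntervalIntegrable f volume 0 (2 * π)) (n : ℤ) :
    ∫ x in (0:ℝ)..(2 * π), fourier (-n) (x : AddCircle (2 * π - 0)) • ((f x : ℝ) : ℂ) =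
    ((∫ x in (0:ℝ)..(2 * π), cos (n * x) * f x : ℝ) : ℂ)
      - Complex.I * ((∫ x in (0:ℝ)..(2 * π), sin (n * x) * f x : ℝ) : ℂ) := by
  have hc : IntervalIntegrable (fun x => cos (n * x) * f x) volume 0 (2 * π) :=
    hf.continuousOn_mul (by fun_prop)
  have hs : IntervalIntegrable (fun x => sin (n * x) * f x) volume 0 (2 * π) :=
    hf.continuousOn_mul (by fun_prop)
  rw [← intervalIntegral.integral_ofReal, ← intervalIntegral.integral_ofReal,
    ← intervalIntegral.integral_const_mul, ← intervalIntegral.integral_sub]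
  · apply intervalIntegral.integral_congr
    intro x _
    simp only [fourier_cs, smul_eq_mul]
    push_cast
    ring
  · exact ⟨Integrable.ofReal hc.1, Integrable.ofReal hc.2⟩
  · exact IntervalIntegrable.const_mul ⟨Integrable.ofReal hs.1, Integrable.ofReal hs.2⟩ _

lemma wirtinger (f g : ℝ → ℝ) (hg : ∀ a b : ℝ, IntervalIntegrable g volume a b)
    (hf : ∀ t, f t = f 0 + ∫ s in (0:ℝ)..t, g s) (hper : f (2 * π) = f 0)
    (hmean : ∫ t in (0:ℝ)..(2 * π), f t = 0)
    (hL : MemLp g 2 (volume.restrict (Ioc 0 (2 * π)))) :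
    ∫ t in (0:ℝ)..(2 * π), f t ^ 2 ≤ ∫ t in (0:ℝ)..(2 * π), g t ^ 2 := by
  have hcont : Continuous f := by
    have hfe : f = fun t => f 0 + ∫ s in (0:ℝ)..t, g s := funext hf
    rw [hfe]
    exact continuous_const.add (intervalIntegral.continuous_primitive hg 0)
  have hpi : (0:ℝ) < 2 * π := by positivity
  have hfL : MemLp (fun x => (f x : ℂ)) 2 (volume.restrict (Ioc 0 (2 * π))) := by
    have hc : Continuous (fun x => (f x : ℂ)) := by fun_prop
    obtain ⟨C, hC⟩ := (isCompact_Icc (a := (0:ℝ)) (b := 2 * π)).exists_bound_of_continuousOn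
      hc.continuousOn
    refine MemLp.of_bound hc.aestronglyMeasurable C ?_
    filter_upwards [ae_restrict_mem measurableSet_Ioc] with x hx
    exact hC x (Ioc_subset_Icc_self hx)
  have hgL : MemLp (fun x => (g x : ℂ)) 2 (volume.restrict (Ioc 0 (2 * π))) := hL.ofReal
  have P1 := hasSum_sq_fourierCoeffOn hpi hfL
  have P2 := hasSum_sq_fourierCoeffOn hpi hgL
  have hle := hasSum_le (fun n => ?_) P1 P2
  · simp only [Complex.norm_real, norm_eq_abs, sq_abs, smul_eq_mul] at hle
    have : 0 < (2 * π - 0)⁻¹ := by rw [sub_zero]; positivity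
    exact le_of_mul_le_mul_left hle this
  have hC := ibp f g (fun x => cos (n * x)) (fun x => - (n * sin (n * x))) (2 * π) hg hf
    (fun x => by
      have := ((hasDerivAt_id x).const_mul (n:ℝ)).cos
      simp only [id] at this
      convert this using 1; ring) (by fun_prop)
  have hS := ibp f g (fun x => sin (n * x)) (fun x => (n * cos (n * x))) (2 * π) hg hf
    (fun x => by
      have := ((hasDerivAt_id x).const_mul (n:ℝ)).sin
      simp only [id] at this
      convert this using 1; ring) (by fun_prop)
  have e1 : cos (n * (2 * π)) = 1 := by simp
  have e2 : sin (n * (2 * π)) = 0 := by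
    have := Real.sin_int_mul_pi (n * 2)
    push_cast at this
    rw [← this]; ring_nf
  simp only [e1, e2, hper, mul_zero, cos_zero, sin_zero, neg_mul, mul_assoc, sub_self, zero_mul,
    intervalIntegral.integral_neg, intervalIntegral.integral_const_mul] at hC hS
  simp only [fourierCoeffOn_eq_integral]
  rw [fourier_int f (hcont.intervalIntegrable _ _), fourier_int g (hg _ _), hC, hS]
  set C := ∫ x in (0:ℝ)..(2 * π), cos (n * x) * f x with hCd
  set S := ∫ x in (0:ℝ)..(2 * π), sin (n * x) * f x
  rcases eq_or_ne n 0 with rfl | hn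
  · have hC0 : C = 0 := by rw [hCd]; simpa using hmean
    have hS0 : S = 0 := by simp [S]
    rw [hC0, hS0]; simp
  · have : (((0 - -(n * S) : ℝ)) : ℂ) - Complex.I * ((0 - n * C : ℝ) : ℂ)
        = (Complex.I * n) * ((C : ℂ) - Complex.I * S) := by
      push_cast
      linear_combination (n * S : ℂ) * Complex.I_sq
    rw [this, norm_smul, norm_smul, norm_mul, norm_mul, Complex.norm_I, one_mul]
    have h1 : (1:ℝ) ≤ ‖(n:ℂ)‖ := by
      rw [Complex.norm_intCast]; exact_mod_cast Int.one_le_abs hn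
    gcongr
    exact le_mul_of_one_le_left (norm_nonneg _) h1

lemma Jmap_norm (n : ℕ) (v : E n) : ‖Jmap n v‖ = ‖v‖ := by
  have hinv : Function.Involutive (fun i : Fin (2 * n) =>
      if i.val % 2 = 0 then (⟨i.val / 2 * 2 + 1, by have := i.isLt; omega⟩ : Fin (2 * n))
      else ⟨i.val - 1, by have := i.isLt; omega⟩) := by
    intro i
    ext
    dsimp only
    split_ifs <;> simp_all <;> omega
  rw [← sq_eq_sq₀ (norm_nonneg _) (norm_nonneg _), EuclideanSpace.norm_sq_eq,
    EuclideanSpace.norm_sq_eq, ← Equiv.sum_comp (hinv.toPerm _) (fun i => ‖v i‖ ^ 2)]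
  apply Finset.sum_congr rfl
  intro i _
  simp only [Jmap, Function.Involutive.coe_toPerm]
  split_ifs with h
  · rw [norm_neg]
    have e : (⟨i.val + 1, by have := i.isLt; omega⟩ : Fin (2 * n)) =
        ⟨i.val / 2 * 2 + 1, by have := i.isLt; omega⟩ := Fin.ext (by dsimp only; omega)
    rw [e]
  · rfl

lemma holder_aux (n : ℕ) (dz : ℝ → E n) (q p : ℝ) (hq : 1 ≤ q) (hqp : q ≤ p)
    (hd : 1 / q - 1 / p ≤ 1 / 2)
    (hL : MemLp dz (ENNReal.ofReal p) (volume.restrict (Set.Ioc (0:ℝ) (2 * π)))) :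
    (∫ t in (0:ℝ)..(2 * π), ‖dz t‖ ^ q) ^ (1 / q) ≤
      (∫ t in (0:ℝ)..(2 * π), ‖dz t‖ ^ p) ^ (1 / p) * √(2 * π) := by
  have hq0 : 0 < q := by linarith
  have hp0 : 0 < p := by linarith
  have hpi : (0:ℝ) ≤ 2 * π := by positivity
  have hle : ENNReal.ofReal q ≤ ENNReal.ofReal p := ENNReal.ofReal_le_ofReal hqp
  have hLq := hL.mono_exponent hle
  have key := eLpNorm_le_eLpNorm_mul_rpow_measure_univ hle hL.1
  rw [hL.eLpNorm_eq_integral_rpow_norm (by simpa using hp0) (by simp),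
    hLq.eLpNorm_eq_integral_rpow_norm (by simpa using hq0) (by simp),
    ENNReal.toReal_ofReal hq0.le, ENNReal.toReal_ofReal hp0.le, Measure.restrict_apply_univ,
    Real.volume_Ioc, sub_zero, ENNReal.ofReal_rpow_of_pos (by positivity),
    ← ENNReal.ofReal_mul (by positivity), ENNReal.ofReal_le_ofReal_iff (by positivity)] at key
  rw [intervalIntegral.integral_of_le hpi, intervalIntegral.integral_of_le hpi, one_div, one_div]
  refine key.trans ?_
  rw [Real.sqrt_eq_rpow]
  gcongr
  linarith [pi_gt_three]

lemma InE.cont {n : ℕ} {p : ℝ} {z dz : ℝ → E n} (h : InE n p z dz) : Continuous z := by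
  obtain ⟨-, hi, hz, -⟩ := h
  have hfe : z = fun t => z 0 + ∫ s in (0:ℝ)..t, dz s := funext hz
  rw [hfe]
  exact continuous_const.add (intervalIntegral.continuous_primitive hi 0)

lemma L1_bound {n : ℕ} {p : ℝ} {z dz : ℝ → E n} (h : InE n p z dz) :
    √2 ≤ ∫ t in (0:ℝ)..(2 * π), ‖dz t‖ := by
  have hc := h.cont
  obtain ⟨-, hi, hz, -, hm, ha⟩ := h
  have hpi : (0:ℝ) < 2 * π := by positivity
  set L := ∫ t in (0:ℝ)..(2 * π), ‖dz t‖ with hLd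
  have hL0 : 0 ≤ L := intervalIntegral.integral_nonneg hpi.le fun _ _ => norm_nonneg _
  have hdiff : ∀ t ∈ Icc 0 (2 * π), ∀ s ∈ Icc 0 (2 * π), ‖z t - z s‖ ≤ L := by
    intro t ht s hs
    have : z t - z s = ∫ r in s..t, dz r := by
      rw [hz t, hz s, add_sub_add_left_eq_sub,
        intervalIntegral.integral_interval_sub_left (hi _ _) (hi _ _)]
    rw [this]
    refine (intervalIntegral.norm_integral_le_integral_norm_uIoc).trans ?_
    rw [hLd, intervalIntegral.integral_of_le hpi.le]
    refine setIntegral_mono_set (hi 0 (2 * π)).norm.1 (ae_of_all _ fun _ => norm_nonneg _) ?_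
    refine HasSubset.Subset.eventuallyLE ?_
    exact Ioc_subset_Ioc (le_min hs.1 ht.1) (max_le hs.2 ht.2)
  have hsup : ∀ t ∈ Icc 0 (2 * π), ‖z t‖ ≤ L := by
    intro t ht
    have e : ∫ s in (0:ℝ)..(2 * π), (z t - z s) = (2 * π) • z t := by
      rw [intervalIntegral.integral_sub (by simp) (hc.intervalIntegrable _ _), hm]
      simp
    have b : ‖∫ s in (0:ℝ)..(2 * π), (z t - z s)‖ ≤ L * |2 * π - 0| := by
      apply intervalIntegral.norm_integral_le_of_norm_le_const
      intro s hs
      rw [uIoc_of_le hpi.le] at hs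
      exact hdiff t ht s (Ioc_subset_Icc_self hs)
    rw [e, norm_smul, sub_zero, norm_of_nonneg hpi.le, abs_of_pos hpi, mul_comm] at b
    exact le_of_mul_le_mul_right b hpi
  have hA : ∫ t in (0:ℝ)..(2 * π), ⟪Jmap n (z t), dz t⟫_ℝ = 2 := by linarith
  have hB : ‖∫ t in (0:ℝ)..(2 * π), ⟪Jmap n (z t), dz t⟫_ℝ‖ ≤
      ∫ t in (0:ℝ)..(2 * π), L * ‖dz t‖ := by
    apply intervalIntegral.norm_integral_le_of_norm_le hpi.le _ ((hi _ _).norm.const_mul _)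
    refine ae_of_all _ fun t ht => ?_
    refine (norm_inner_le_norm _ _).trans ?_
    rw [Jmap_norm]
    gcongr
    exact hsup t (Ioc_subset_Icc_self ht)
  rw [hA, intervalIntegral.integral_const_mul, ← hLd] at hB
  rw [Real.sqrt_le_left hL0]
  norm_num at hB
  nlinarith

lemma L2_bound {n : ℕ} {p : ℝ} {z dz : ℝ → E n} (h : InE n p z dz) (hp : 2 ≤ p) :
    2 ≤ ∫ t in (0:ℝ)..(2 * π), ‖dz t‖ ^ 2 := by
  have hc := h.cont
  obtain ⟨hper, hi, hz, hL, hm, ha⟩ := h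
  have hpi : (0:ℝ) < 2 * π := by positivity
  have hL2 : MemLp dz 2 (volume.restrict (Set.Ioc (0:ℝ) (2 * π))) := by
    apply hL.mono_exponent
    rw [← ENNReal.ofReal_ofNat]
    exact ENNReal.ofReal_le_ofReal hp
  have hcoordL : ∀ i, MemLp (fun t => dz t i) 2 (volume.restrict (Set.Ioc (0:ℝ) (2 * π))) :=
    fun i => (EuclideanSpace.proj (𝕜 := ℝ) i).comp_memLp' hL2
  have hcoord : ∀ i, ∫ t in (0:ℝ)..(2 * π), (z t i) ^ 2 ≤ ∫ t in (0:ℝ)..(2 * π), (dz t i) ^ 2 := by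
    intro i
    have hint : ∀ (w : ℝ → E n) (a b : ℝ), IntervalIntegrable w volume a b →
        (∫ s in a..b, w s) i = ∫ s in a..b, w s i := fun w a b hw =>
      ((EuclideanSpace.proj (𝕜 := ℝ) i).intervalIntegral_comp_comm hw).symm
    apply wirtinger
    · intro a b
      exact ⟨(EuclideanSpace.proj (𝕜 := ℝ) i).integrable_comp (hi a b).1,
        (EuclideanSpace.proj (𝕜 := ℝ) i).integrable_comp (hi a b).2⟩
    · intro t
      rw [← hint dz 0 t (hi 0 t)]
      conv_lhs => rw [hz t]
      rfl
    · have := hper 0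
      rw [zero_add] at this
      rw [this]
    · rw [← hint z _ _ (hc.intervalIntegrable _ _), hm]; rfl
    · exact hcoordL i
  have hzc : ∀ i, Continuous fun t => z t i := fun i =>
    (EuclideanSpace.proj (𝕜 := ℝ) i).continuous.comp hc
  have hW : ∫ t in (0:ℝ)..(2 * π), ‖z t‖ ^ 2 ≤ ∫ t in (0:ℝ)..(2 * π), ‖dz t‖ ^ 2 := by
    simp only [EuclideanSpace.norm_sq_eq, Real.norm_eq_abs, sq_abs]
    rw [intervalIntegral.integral_finsetSum, intervalIntegral.integral_finsetSum]
    · exact Finset.sum_le_sum fun i _ => hcoord i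
    · intro i _
      rw [intervalIntegrable_iff_integrableOn_Ioc_of_le hpi.le]
      exact (hcoordL i).integrable_sq
    · intro i _
      exact ((hzc i).pow 2).intervalIntegrable _ _
  have hI1 : IntervalIntegrable (fun t => ‖z t‖ ^ 2) volume 0 (2 * π) :=
    (hc.norm.pow 2).intervalIntegrable _ _
  have hI2 : IntervalIntegrable (fun t => ‖dz t‖ ^ 2) volume 0 (2 * π) := by
    rw [intervalIntegrable_iff_integrableOn_Ioc_of_le hpi.le]
    exact hL2.norm.integrable_sq
  have hA : ∫ t in (0:ℝ)..(2 * π), ⟪Jmap n (z t), dz t⟫_ℝ = 2 := by linarith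
  have hB : ‖∫ t in (0:ℝ)..(2 * π), ⟪Jmap n (z t), dz t⟫_ℝ‖ ≤
      ∫ t in (0:ℝ)..(2 * π), (1 / 2) * (‖z t‖ ^ 2 + ‖dz t‖ ^ 2) := by
    apply intervalIntegral.norm_integral_le_of_norm_le hpi.le _ ((hI1.add hI2).const_mul _)
    refine ae_of_all _ fun t ht => ?_
    refine (norm_inner_le_norm _ _).trans ?_
    rw [Jmap_norm]
    nlinarith [sq_nonneg (‖z t‖ - ‖dz t‖)]
  rw [hA, intervalIntegral.integral_const_mul, intervalIntegral.integral_add hI1 hI2] at hB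
  norm_num at hB
  linarith

lemma part_one (n : ℕ) (p : ℝ) (hp : 1 < p) (z dz : ℝ → E n) (h : InE n p z dz) :
    π ^ (-(1:ℝ) / 2) ≤ (∫ t in (0:ℝ)..(2 * π), ‖dz t‖ ^ p) ^ (1 / p) := by
  have main : √2 ≤ (∫ t in (0:ℝ)..(2 * π), ‖dz t‖ ^ p) ^ (1 / p) * √(2 * π) := by
    rcases le_total p 2 with hp2 | hp2
    · have := holder_aux n dz 1 p le_rfl hp.le (by
        have := one_div_le_one_div_of_le (by linarith : 0 < p) hp2
        linarith) h.2.2.2.1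
      refine le_trans ?_ this
      simpa using L1_bound h
    · have := holder_aux n dz 2 p (by norm_num) hp2 (by
        have : 0 < 1 / p := by positivity
        linarith) h.2.2.2.1
      refine le_trans ?_ this
      rw [← Real.sqrt_eq_rpow]
      apply Real.sqrt_le_sqrt
      simpa using L2_bound h hp2
  rw [Real.sqrt_mul (by norm_num), mul_left_comm] at main
  have h2 : (0:ℝ) < √2 := by positivity
  have hpi : (0:ℝ) < √π := by positivity
  have m2 : 1 ≤ (∫ t in (0:ℝ)..(2 * π), ‖dz t‖ ^ p) ^ (1 / p) * √π := by
    apply le_of_mul_le_mul_left _ h2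
    simpa using main
  rw [neg_div, Real.rpow_neg pi_pos.le, ← Real.sqrt_eq_rpow, ← one_div, div_le_iff₀ hpi]
  exact m2

lemma suppFn_lip (n : ℕ) (K : Set (E n)) (hK : IsCompact K) (hne : K.Nonempty) :
    ∃ C : NNReal, LipschitzWith C (suppFn n K) := by
  obtain ⟨R, hR⟩ := hK.isBounded.exists_norm_le
  have hR0 : 0 ≤ R := (norm_nonneg _).trans (hR _ hne.some_mem)
  have hbdd : ∀ u, BddAbove ((fun x => ⟪x, u⟫_ℝ) '' K) := fun u =>
    (hK.image (by fun_prop)).bddAbove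
  refine ⟨⟨R, hR0⟩, LipschitzWith.of_le_add_mul _ ?_⟩
  intro u v
  apply csSup_le (hne.image _)
  rintro _ ⟨x, hx, rfl⟩
  have h1 : ⟪x, v⟫_ℝ ≤ suppFn n K v := le_csSup (hbdd v) ⟨x, hx, rfl⟩
  have h2 : ⟪x, u - v⟫_ℝ ≤ R * dist u v := by
    rw [dist_eq_norm]
    refine (real_inner_le_norm _ _).trans ?_
    gcongr
    exact hR x hx
  rw [inner_sub_right] at h2
  show ⟪x, u⟫_ℝ ≤ suppFn n K v + R * dist u v
  linarith

/-- For every `z ∈ 𝓔_p` one has `‖ż‖_{L^p} ≥ π^{-1/2}`; consequently, if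
`h_K(y) ≥ α^{-1/p}|y|` for some `α ≥ 1`, then `∫₀^{2π} h_K^p(ż) ≥ π^{-p/2}/α > 0`. -/
theorem loop_Lp_lower_bound (n : ℕ) (p : ℝ) (hp : 1 < p) :
    (∀ z dz : ℝ → E n, InE n p z dz →
      (∫ t in (0:ℝ)..(2 * π), ‖dz t‖ ^ p) ^ (1 / p) ≥ π ^ (-(1:ℝ) / 2)) ∧
    (∀ K : Set (E n), IsConvexBody n K → (0 : E n) ∈ interior K →
      ∀ α : ℝ, 1 ≤ α → (∀ y : E n, suppFn n K y ≥ α ^ (-(1:ℝ) / p) * ‖y‖) →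
      ∀ z dz : ℝ → E n, InE n p z dz →
        (∫ t in (0:ℝ)..(2 * π), suppFn n K (dz t) ^ p) ≥ π ^ (-p / 2) / α ∧
          (0:ℝ) < π ^ (-p / 2) / α) := by
  refine ⟨fun z dz h => part_one n p hp z dz h, ?_⟩
  intro K hK h0 α hα hsupp z dz h
  have hα0 : 0 < α := by linarith
  have hp0 : 0 < p := by linarith
  have hpi : (0:ℝ) ≤ 2 * π := by positivity
  refine ⟨?_, by positivity⟩
  have h1 := part_one n p hp z dz h
  have hI0 : 0 ≤ ∫ t in (0:ℝ)..(2 * π), ‖dz t‖ ^ p :=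
    intervalIntegral.integral_nonneg hpi fun _ _ => by positivity
  have h2 : π ^ (-p / 2) ≤ ∫ t in (0:ℝ)..(2 * π), ‖dz t‖ ^ p := by
    have := Real.rpow_le_rpow (by positivity) h1 hp0.le
    rw [← Real.rpow_mul pi_pos.le, ← Real.rpow_mul hI0, one_div_mul_cancel hp0.ne',
      Real.rpow_one] at this
    convert this using 2
    ring
  obtain ⟨C, hC⟩ := suppFn_lip n K hK.1 ⟨0, interior_subset h0⟩
  have hL := h.2.2.2.1
  have hs0 : suppFn n K 0 = 0 := by
    have : (fun x : E n => ⟪x, (0 : E n)⟫_ℝ) '' K = {0} := by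
      simp only [inner_zero_right]
      exact Set.Nonempty.image_const ⟨0, interior_subset h0⟩ 0
    rw [suppFn, this, csSup_singleton]
  have hnn : ∀ y, 0 ≤ suppFn n K y := fun y => le_trans (by positivity) (hsupp y)
  have hSL : MemLp (fun t => suppFn n K (dz t)) (ENNReal.ofReal p)
      (volume.restrict (Set.Ioc (0:ℝ) (2 * π))) := hC.comp_memLp hs0 hL
  have hint1 := hL.integrable_norm_rpow (by simpa using hp0) (by simp)
  have hint2 := hSL.integrable_norm_rpow (by simpa using hp0) (by simp)
  simp only [ENNReal.toReal_ofReal hp0.le, Real.norm_of_nonneg (hnn _)] at hint1 hint2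
  have h3 : ∫ t in (0:ℝ)..(2 * π), α⁻¹ * ‖dz t‖ ^ p ≤
      ∫ t in (0:ℝ)..(2 * π), suppFn n K (dz t) ^ p := by
    apply intervalIntegral.integral_mono_on hpi
    · rw [intervalIntegrable_iff_integrableOn_Ioc_of_le hpi]
      exact hint1.const_mul _
    · rw [intervalIntegrable_iff_integrableOn_Ioc_of_le hpi]
      exact hint2
    · intro t _
      have := Real.rpow_le_rpow (by positivity) (hsupp (dz t)) hp0.le
      rw [Real.mul_rpow (by positivity) (norm_nonneg _), ← Real.rpow_mul hα0.le,
        div_mul_cancel₀ _ hp0.ne', Real.rpow_neg_one] at this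
      exact this
  rw [intervalIntegral.integral_const_mul] at h3
  refine le_trans ?_ h3
  rw [div_eq_inv_mul]
  gcongr
end
end

section
/- Let K ⊂ ℝ^{2n} be a convex body with 0 in its interior whose support function h_K and gauge function ‖·‖_K are both C¹ on ℝ^{2n}∖{0}. Let p > 1 and q = p/(p−1). Suppose l : ℝ → ℝ^{2n} is a 2π-periodic C¹ curve with l(t) ∈ ∂K for all t which satisfies l̇(t) = d·J∇(h_{K°}^q)(l(t)) for some constant d > 0. Then the loop z(t) := −J·(π d q)^{−1/2}·(l(t) − (1/2π)∫₀^{2π} l(s) ds) belongs to 𝓔_p and is a critical point of the functional I_p(z) = ∫₀^{2π} h_K^p(ż(t)) dt. -/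
open MeasureTheory Real Set Filter intervalIntegral Metric
open scoped InnerProductSpace Topology Pointwise

noncomputable section

def JL (n : ℕ) : E n →L[ℝ] E n := LinearMap.toContinuousLinearMap
  { toFun := Jmap n
    map_add' := by
      intro x y
      ext i
      simp only [Jmap, PiLp.add_apply]
      split_ifs <;> ring
    map_smul' := by
      intro a x
      ext i
      simp only [Jmap, PiLp.smul_apply, smul_eq_mul, RingHom.id_apply]
      split_ifs <;> ring }

lemma JL_apply (n : ℕ) (v : E n) : JL n v = Jmap n v := rfl

lemma Jmap_Jmap (n : ℕ) (v : E n) : Jmap n (Jmap n v) = -v := by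
  ext i
  simp only [Jmap, PiLp.neg_apply]
  by_cases h : i.val % 2 = 0
  · have h2 : ¬ (i.val + 1) % 2 = 0 := by omega
    simp [h, h2]
  · have h2 : (i.val - 1) % 2 = 0 := by omega
    have h3 : i.val - 1 + 1 = i.val := by omega
    simp [h, h2, h3]

lemma le_suppFn {n : ℕ} {K : Set (E n)} (hK : IsCompact K) {x : E n} (hx : x ∈ K) (u : E n) :
    ⟪x, u⟫_ℝ ≤ suppFn n K u := by
  apply le_csSup
  · exact (hK.image (by fun_prop)).bddAbove
  · exact ⟨x, hx, rfl⟩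

lemma grad_rpow {F : Type*} [NormedAddCommGroup F] [InnerProductSpace ℝ F] [CompleteSpace F]
    {f : F → ℝ} {x v : F} (r : ℝ) (hf : HasGradientAt f v x) (hx : f x ≠ 0) :
    gradient (fun y => f y ^ r) x = (r * f x ^ (r - 1)) • v := by
  apply HasGradientAt.gradient
  rw [hasGradientAt_iff_hasFDerivAt] at hf ⊢
  have := hf.rpow_const (p := r) (Or.inl hx)
  have e : InnerProductSpace.toDual ℝ F ((r * f x ^ (r - 1)) • v)
      = (r * f x ^ (r - 1)) • InnerProductSpace.toDual ℝ F v := by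
    ext y
    simp [inner_smul_left]
  rw [e]
  exact this

lemma grad_of_support {F : Type*} [NormedAddCommGroup F] [InnerProductSpace ℝ F] [CompleteSpace F]
    {f : F → ℝ} {u x : F} (hf : DifferentiableAt ℝ f u) (hle : ∀ y, ⟪x, y⟫_ℝ ≤ f y)
    (heq : ⟪x, u⟫_ℝ = f u) : HasGradientAt f x u := by
  rw [hasGradientAt_iff_hasFDerivAt]
  have h1 : HasFDerivAt (fun y => f y - InnerProductSpace.toDual ℝ F x y)
      (fderiv ℝ f u - InnerProductSpace.toDual ℝ F x) u :=
    hf.hasFDerivAt.sub (InnerProductSpace.toDual ℝ F x).hasFDerivAt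
  have hmin : IsLocalMin (fun y => f y - InnerProductSpace.toDual ℝ F x y) u := by
    apply Filter.Eventually.of_forall
    intro y
    simp only [InnerProductSpace.toDual_apply_apply]
    have := hle y
    linarith
  have h2 := hmin.hasFDerivAt_eq_zero h1
  have := hf.hasFDerivAt
  rwa [sub_eq_zero.mp h2] at this

lemma gauge_grad {n : ℕ} {K : Set (E n)} (hc : Convex ℝ K) (h0 : K ∈ 𝓝 (0 : E n))
    {x v : E n} (hv : HasGradientAt (gauge K) v x) :
    ⟪v, x⟫_ℝ = gauge K x ∧ ∀ y, ⟪v, y⟫_ℝ ≤ gauge K y := by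
  rw [hasGradientAt_iff_hasFDerivAt] at hv
  have hline : ∀ y : E n, HasDerivAt (fun t : ℝ => gauge K (x + t • y)) ⟪v, y⟫_ℝ 0 := by
    intro y
    have h1 : HasDerivAt (fun t : ℝ => x + t • y) y 0 := by
      simpa using ((hasDerivAt_id (0:ℝ)).smul_const y).const_add x
    have h2 : HasFDerivAt (gauge K) (InnerProductSpace.toDual ℝ (E n) v) (x + (0:ℝ) • y) := by
      simpa using hv
    exact h2.comp_hasDerivAt (0:ℝ) h1
  constructor
  · have h1 := hline x
    have h2 : HasDerivAt (fun t : ℝ => (1 + t) * gauge K x) (gauge K x) 0 := by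
      simpa using ((hasDerivAt_id (0:ℝ)).const_add 1).mul_const (gauge K x)
    have h3 : (fun t : ℝ => gauge K (x + t • x)) =ᶠ[𝓝 0] fun t : ℝ => (1 + t) * gauge K x := by
      filter_upwards [lt_mem_nhds (show (-1:ℝ) < 0 by norm_num)] with t ht
      have : x + t • x = (1 + t) • x := by rw [add_smul, one_smul]
      rw [this, gauge_smul_of_nonneg (by linarith), smul_eq_mul]
    exact h1.unique (h2.congr_of_eventuallyEq h3)
  · intro y
    have h1 := (hline y).tendsto_slope_zero_right
    apply le_of_tendsto h1
    filter_upwards [self_mem_nhdsWithin] with t ht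
    have ht : 0 < t := ht
    have h2 := gauge_add_le hc (absorbent_nhds_zero h0) x (t • y)
    rw [gauge_smul_of_nonneg ht.le, smul_eq_mul] at h2
    simp only [zero_add, zero_smul, add_zero, smul_eq_mul]
    rw [inv_mul_le_iff₀ ht]
    linarith

lemma ibp_s10 {n : ℕ} {l ξ dξ : ℝ → E n} {b : ℝ} (hb : 0 ≤ b) (hl : ContDiff ℝ 1 l)
    (hdξ : IntervalIntegrable dξ volume 0 b)
    (hξ : ∀ t, ξ t = ξ 0 + ∫ s in (0:ℝ)..t, dξ s)
    (hl0 : l b = l 0) (hξ0 : ξ b = ξ 0) :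
    ∫ t in (0:ℝ)..b, ⟪l t, dξ t⟫_ℝ = - ∫ t in (0:ℝ)..b, ⟪ξ t, deriv l t⟫_ℝ := by
  have hdl : Continuous (deriv l) := hl.continuous_deriv le_rfl
  have hli : ∀ i, ContDiff ℝ 1 (fun t => l t i) := fun i => by fun_prop
  have hder : ∀ i t, deriv (fun t => l t i) t = deriv l t i := by
    intro i t
    have h := (hl.differentiable one_ne_zero t).hasDerivAt
    exact ((EuclideanSpace.proj (𝕜 := ℝ) i).hasFDerivAt.comp_hasDerivAt t h).deriv
  have hdξi : ∀ i, IntervalIntegrable (fun t => dξ t i) volume 0 b := fun i =>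
    ⟨(EuclideanSpace.proj (𝕜 := ℝ) i).integrable_comp hdξ.1,
     (EuclideanSpace.proj (𝕜 := ℝ) i).integrable_comp hdξ.2⟩
  have hξi : ∀ i, ∀ t ∈ uIcc 0 b, ξ t i = ξ 0 i + ∫ s in (0:ℝ)..t, dξ s i := by
    intro i t ht
    have h1 : IntervalIntegrable dξ volume 0 t :=
      hdξ.mono_set (uIcc_subset_uIcc_left ht)
    have := (EuclideanSpace.proj (𝕜 := ℝ) i).intervalIntegral_comp_comm h1
    have h2 : ∫ s in (0:ℝ)..t, dξ s i = (∫ s in (0:ℝ)..t, dξ s) i := this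
    rw [h2]
    conv_lhs => rw [hξ t]
    rfl
  have hAC : ∀ i, AbsolutelyContinuousOnInterval (fun t => ξ 0 i + ∫ s in (0:ℝ)..t, dξ s i) 0 b := by
    intro i
    have h1 := (hdξi i).absolutelyContinuousOnInterval_intervalIntegral (c := 0) left_mem_uIcc
    have h2 : AbsolutelyContinuousOnInterval (fun _ : ℝ => ξ 0 i) 0 b :=
      (contDiff_const (n := 1)).contDiffOn.absolutelyContinuousOnInterval
    exact h2.add h1
  have key : ∀ i, ∫ t in (0:ℝ)..b, l t i * dξ t i = - ∫ t in (0:ℝ)..b, deriv l t i * ξ t i := by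
    intro i
    have h1 := ((hli i).contDiffOn (s := uIcc 0 b)).absolutelyContinuousOnInterval
    have h2 := h1.integral_mul_deriv_eq_deriv_mul (hAC i)
    rw [← hξi i b right_mem_uIcc, ← hξi i 0 left_mem_uIcc, hl0, hξ0, sub_self, zero_sub] at h2
    have h3 : ∫ t in (0:ℝ)..b, deriv (fun t => l t i) t * (ξ 0 i + ∫ s in (0:ℝ)..t, dξ s i)
        = ∫ t in (0:ℝ)..b, deriv l t i * ξ t i := by
      apply intervalIntegral.integral_congr
      intro t ht
      simp only
      rw [hder, hξi i t ht]
    rw [h3] at h2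
    rw [← h2]
    apply intervalIntegral.integral_congr_ae
    filter_upwards [(hdξi i).ae_hasDerivAt_integral] with t ht htm
    have := (ht (uIoc_subset_uIcc htm) 0 left_mem_uIcc).const_add (ξ 0 i)
    rw [this.deriv]
  have hcξ : ∀ i, ContinuousOn (fun t => ξ t i) (uIcc 0 b) := fun i =>
    (hAC i).continuousOn.congr (hξi i)
  have hlcont := hl.continuous
  simp only [PiLp.inner_apply, RCLike.inner_apply, conj_trivial]
  rw [intervalIntegral.integral_finsetSum, intervalIntegral.integral_finsetSum,
    ← Finset.sum_neg_distrib]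
  · apply Finset.sum_congr rfl
    intro i _
    rw [← key i]
    simp only [mul_comm]
  · intro i _
    exact ContinuousOn.intervalIntegrable
      (ContinuousOn.mul (by fun_prop) (hcξ i))
  · intro i _
    exact (hdξi i).mul_continuousOn (by fun_prop)

/-- From a closed characteristic `l` on `∂K` (i.e. `l̇ = d·J∇(h_{K°}^q)(l)`), the loop
`z(t) = −J·(πdq)^{-1/2}·(l(t) − mean l)` belongs to `𝓔_p` and is a critical point of
the functional `I_p(z) = ∫₀^{2π} h_K^p(ż)`. -/
theorem characteristic_gives_critical_point (n : ℕ) (K : Set (E n)) (hK : IsConvexBody n K)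
    (h0 : (0 : E n) ∈ interior K)
    (hsupp : ContDiffOn ℝ 1 (suppFn n K) {(0 : E n)}ᶜ)
    (hgauge : ContDiffOn ℝ 1 (gauge K) {(0 : E n)}ᶜ)
    (p q : ℝ) (hp : 1 < p) (hq : q = p / (p - 1))
    (l : ℝ → E n) (hlC1 : ContDiff ℝ 1 l) (hlper : Function.Periodic l (2 * π))
    (hlK : ∀ t, l t ∈ frontier K)
    (d : ℝ) (hd : 0 < d)
    (hchar : ∀ t, deriv l t = d • Jmap n (gradient (fun x => gauge K x ^ q) (l t)))
    (z : ℝ → E n)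
    (hzdef : ∀ t, z t =
      -(((π * d * q) ^ (-(1:ℝ) / 2)) •
        Jmap n (l t - (1 / (2 * π)) • ∫ s in (0:ℝ)..(2 * π), l s))) :
    InE n p z (deriv z) ∧ IsCriticalPoint n p K z (deriv z) := by
  obtain ⟨hKc, hKconv, -⟩ := hK
  have hK0 : K ∈ 𝓝 (0 : E n) := mem_interior_iff_mem_nhds.mp h0
  have hq0 : 0 < q := by rw [hq]; exact div_pos (by linarith) (by linarith)
  have hpi := Real.pi_pos
  set c : ℝ := (π * d * q) ^ (-(1:ℝ) / 2) with hc
  have hpdq : 0 < π * d * q := by positivity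
  have hcpos : 0 < c := Real.rpow_pos_of_pos hpdq _
  have hcc : c * c * (π * d * q) = 1 := by
    rw [hc, ← Real.rpow_add hpdq]
    norm_num
    rw [Real.rpow_neg_one]
    field_simp
  set m : E n := (1 / (2 * π)) • ∫ s in (0:ℝ)..(2 * π), l s with hm
  have hlK' : ∀ t, l t ∈ K := fun t => by
    have := frontier_subset_closure (hlK t)
    rwa [hKc.isClosed.closure_eq] at this
  have hg1 : ∀ t, gauge K (l t) = 1 := fun t =>
    (gauge_eq_one_iff_mem_frontier hKconv hK0).mpr (hlK t)
  have hl0 : ∀ t, l t ≠ 0 := fun t h => by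
    have := hg1 t
    rw [h, gauge_zero] at this
    norm_num at this
  have hopen : IsOpen ({(0 : E n)}ᶜ : Set (E n)) := isOpen_compl_singleton
  have hgd : ∀ t, HasGradientAt (gauge K) (gradient (gauge K) (l t)) (l t) := fun t =>
    ((hgauge.differentiableOn one_ne_zero).differentiableAt
      (hopen.mem_nhds (hl0 t))).hasGradientAt
  set v : ℝ → E n := fun t => gradient (gauge K) (l t) with hv
  have hvl : ∀ t, ⟪v t, l t⟫_ℝ = 1 := fun t => by
    rw [← hg1 t]; exact (gauge_grad hKconv hK0 (hgd t)).1
  have hvy : ∀ t, ∀ y ∈ K, ⟪v t, y⟫_ℝ ≤ 1 := fun t y hy =>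
    ((gauge_grad hKconv hK0 (hgd t)).2 y).trans (gauge_le_one_of_mem hy)
  have hld : ∀ t, deriv l t = (d * q) • Jmap n (v t) := by
    intro t
    rw [hchar t, grad_rpow q (hgd t) (by rw [hg1]; norm_num), hg1]
    simp only [← JL_apply, map_smul, Real.one_rpow, mul_one, smul_smul]
    rfl
  set lam : ℝ := c * (d * q) with hlam
  have hlampos : 0 < lam := by positivity
  have hzd : ∀ t, HasDerivAt z (lam • v t) t := by
    intro t
    have h1 : HasDerivAt l (deriv l t) t := (hlC1.differentiable one_ne_zero t).hasDerivAt
    have h2 := ((((JL n).hasFDerivAt.comp_hasDerivAt t (h1.sub_const m))).const_smul c).neg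
    have h3 : z = -(c • (JL n ∘ fun t => l t - m)) := by
      funext s
      rw [hzdef s]; rfl
    rw [h3]
    have e : lam • v t = -(c • JL n (deriv l t)) := by
      rw [hld t, map_smul, JL_apply, Jmap_Jmap, smul_neg, smul_neg, neg_neg, smul_smul]
    rw [e]
    exact h2
  have hdz : ∀ t, deriv z t = lam • v t := fun t => (hzd t).deriv
  have hlz : ∀ t, deriv z t = -(c • Jmap n (deriv l t)) := by
    intro t
    rw [hdz, hld]
    simp only [← JL_apply, map_smul]
    rw [JL_apply, JL_apply, Jmap_Jmap, smul_neg, smul_neg, neg_neg, smul_smul]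
  have hdlc : Continuous (deriv l) := hlC1.continuous_deriv le_rfl
  have hdzc : Continuous (deriv z) := by
    have : deriv z = fun t => -(c • JL n (deriv l t)) := funext hlz
    rw [this]
    fun_prop
  have hzc : Continuous z := continuous_iff_continuousAt.mpr fun t => (hzd t).continuousAt
  have hper : Function.Periodic z (2 * π) := by
    intro t
    rw [hzdef, hzdef, hlper t]
  have hftc : ∀ a b, ∫ s in a..b, deriv z s = z b - z a := fun a b =>
    intervalIntegral.integral_deriv_eq_sub (fun x _ => (hzd x).differentiableAt)
      (hdzc.intervalIntegrable _ _)
  have hlc : Continuous l := hlC1.continuous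
  have hJz : ∀ t, Jmap n (z t) = c • (l t - m) := by
    intro t
    rw [hzdef, ← JL_apply, map_neg, map_smul, JL_apply, Jmap_Jmap, smul_neg, neg_neg]
  refine ⟨⟨hper, fun a b => hdzc.intervalIntegrable _ _, ?_, ?_, ?_, ?_⟩, ?_⟩
  · intro t
    rw [hftc]; abel
  · obtain ⟨C, hC⟩ := isCompact_Icc.exists_bound_of_continuousOn
      (hdzc.continuousOn (s := Set.Icc (0:ℝ) (2 * π)))
    refine MemLp.of_bound hdzc.aestronglyMeasurable C ?_
    filter_upwards [ae_restrict_mem measurableSet_Ioc] with t ht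
    exact hC t (Ioc_subset_Icc_self ht)
  · have h1 : ∀ t, z t = (-(c • JL n)) (l t - m) := fun t => by
      rw [hzdef]; rfl
    simp only [h1]
    rw [ContinuousLinearMap.intervalIntegral_comp_comm _
      ((by fun_prop : Continuous fun t => l t - m).intervalIntegrable _ _),
      intervalIntegral.integral_sub (hlc.intervalIntegrable _ _) (by simp),
      intervalIntegral.integral_const, hm, smul_smul]
    have : (2 * π - 0) * (1 / (2 * π)) = 1 := by field_simp; ring
    rw [this, one_smul, sub_self, map_zero]
  · have h1 : ∀ t, ⟪Jmap n (z t), deriv z t⟫_ℝ = c * lam - c * ⟪m, deriv z t⟫_ℝ := by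
      intro t
      rw [hJz, inner_smul_left, inner_sub_left, hdz, inner_smul_right, real_inner_comm, hvl]
      simp only [conj_trivial]
      ring
    have h2 : ∫ t in (0:ℝ)..(2 * π), ⟪m, deriv z t⟫_ℝ = 0 := by
      have := (innerSL ℝ m).intervalIntegral_comp_comm (hdzc.intervalIntegrable (μ := volume) 0 (2 * π))
      simp only [innerSL_apply_apply] at this
      rw [this, hftc]
      have h3 := hper 0
      rw [zero_add] at h3
      rw [h3, sub_self, inner_zero_right]
    simp only [h1]
    rw [intervalIntegral.integral_sub (by simp)
      ((by fun_prop : Continuous fun t => c * ⟪m, deriv z t⟫_ℝ).intervalIntegrable _ _),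
      intervalIntegral.integral_const_mul c (fun t => ⟪m, deriv z t⟫_ℝ), h2, intervalIntegral.integral_const, smul_eq_mul, hlam]
    linear_combination hcc
  · intro ξ dξ hξper hdξ hξ _ _ hort
    have hsup : ∀ t, suppFn n K (deriv z t) = lam := by
      intro t
      apply le_antisymm
      · apply csSup_le
        · exact ⟨_, l t, hlK' t, rfl⟩
        · rintro _ ⟨y, hy, rfl⟩
          simp only
          rw [hdz, inner_smul_right, real_inner_comm]
          have := hvy t y hy
          nlinarith
      · have := le_suppFn hKc (hlK' t) (deriv z t)
        refine le_trans (le_of_eq ?_) this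
        rw [hdz, inner_smul_right, real_inner_comm, hvl, mul_one]
    have hne : ∀ t, deriv z t ≠ 0 := by
      intro t h
      rw [hdz, smul_eq_zero] at h
      rcases h with h | h
      · exact hlampos.ne' h
      · have := hvl t
        rw [h, inner_zero_left] at this
        norm_num at this
    have hsg : ∀ t, HasGradientAt (suppFn n K) (l t) (deriv z t) := by
      intro t
      apply grad_of_support
      · exact (hsupp.differentiableOn one_ne_zero).differentiableAt (hopen.mem_nhds (hne t))
      · exact le_suppFn hKc (hlK' t)
      · rw [hsup, hdz, inner_smul_right, real_inner_comm, hvl, mul_one]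
    have hgr : ∀ t, gradient (fun u => suppFn n K u ^ p) (deriv z t)
        = (p * lam ^ (p - 1)) • l t := by
      intro t
      rw [grad_rpow p (hsg t) (by rw [hsup]; exact hlampos.ne'), hsup]
    simp only [hgr, inner_smul_left, conj_trivial]
    rw [intervalIntegral.integral_const_mul]
    have hl2 : l (2 * π) = l 0 := by simpa using hlper 0
    have hξ2 : ξ (2 * π) = ξ 0 := by simpa using hξper 0
    rw [ibp_s10 (by positivity) hlC1 (hdξ _ _) hξ hl2 hξ2]
    have h1 : ∀ t, ⟪ξ t, deriv l t⟫_ℝ = c⁻¹ * ⟪ξ t, Jmap n (deriv z t)⟫_ℝ := by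
      intro t
      rw [hdz, hld, ← JL_apply, ← JL_apply, map_smul, inner_smul_right, inner_smul_right, hlam]
      field_simp
    simp only [h1]
    rw [intervalIntegral.integral_const_mul, hort]
    simp
end
end
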